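/- Let D be a non-trivial quasi-symmetric 2-(v,k,λ) design with block intersection numbers x = 0 and y ≥ 2. Then v < (k² − k)/(y − 1). -/

import Mathlib

/-- A 2-(v,k,λ) design on a finite point set `P`: a collection of `k`-element
subsets of `P` (blocks) such that every pair of distinct points lies in exactly
`lam` blocks (with `lam ≥ 1`). -/
structure TwoDesign (P : Type*) [Fintype P] [DecidableEq P] (v k lam : ℕ) where
  blocks : Finset (Finset P)
  card_points : Fintype.card P = v
  block_card : ∀ B ∈ blocks, B.card = k
  lam_pos : 0 < lam
  pair_blocks : ∀ p q : P, p ≠ q →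
    (blocks.filter fun B => p ∈ B ∧ q ∈ B).card = lam

/-- A family of blocks is quasi-symmetric with block intersection numbers
`0` and `y` if any two distinct blocks meet in either `0` or `y` points,
and both intersection sizes actually occur. -/
def QuasiSymmetricZero {P : Type*} [DecidableEq P]
    (blocks : Finset (Finset P)) (y : ℕ) : Prop :=
  (∀ B₁ ∈ blocks, ∀ B₂ ∈ blocks, B₁ ≠ B₂ →
    (B₁ ∩ B₂).card = 0 ∨ (B₁ ∩ B₂).card = y) ∧
  (∃ B₁ ∈ blocks, ∃ B₂ ∈ blocks, B₁ ≠ B₂ ∧ (B₁ ∩ B₂).card = 0) ∧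
  (∃ B₁ ∈ blocks, ∃ B₂ ∈ blocks, B₁ ≠ B₂ ∧ (B₁ ∩ B₂).card = y)

/-!
Fix a block `B` and a point `p ∈ B`, and let `r` be the number of blocks through `p`. Counting
the pairs `(C, q)` with `C` a block through `p` and `q ∈ C`, `q ≠ p`, gives
`r (k - 1) = λ (v - 1)`. Every block through `p` other than `B` meets `B`, hence in at least `y`
points, so restricting the count to `q ∈ B` gives `(k - 1) + (r - 1)(y - 1) ≤ λ (k - 1)`.
Eliminating `r`, one finds
`(k - y)(λ + k - 1) ≤ λ (k (k - 1) - v (y - 1))`,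
and the left-hand side is positive because two distinct blocks meet in fewer than `k` points.
-/

namespace TwoDesign

open Finset

variable {P : Type*} [Fintype P] [DecidableEq P] {v k lam y : ℕ} (D : TwoDesign P v k lam)
  {p q : P} {B C T : Finset P}

/-- The blocks incident with a point `p`; their number is the replication number of the design. -/
def blocksThrough (p : P) : Finset (Finset P) := {B ∈ D.blocks | p ∈ B}

theorem mem_blocksThrough : B ∈ D.blocksThrough p ↔ B ∈ D.blocks ∧ p ∈ B :=
  mem_filter

theorem exists_block_mem_mem (hpq : p ≠ q) : ∃ B ∈ D.blocks, p ∈ B ∧ q ∈ B := by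
  simpa only [Finset.Nonempty, mem_filter] using
    card_pos.1 (D.lam_pos.trans_eq (D.pair_blocks p q hpq).symm)

theorem card_inter_lt (hB : B ∈ D.blocks) (hC : C ∈ D.blocks) (hBC : B ≠ C) :
    #(B ∩ C) < k := by
  have hBk := D.block_card B hB
  have hCk := D.block_card C hC
  have hnot : ¬B ⊆ C := fun h => hBC (eq_of_subset_of_card_le h (hCk.trans hBk.symm).le)
  exact hBk ▸ card_lt_card (inter_subset_left.ssubset_of_ne (mt inter_eq_left.1 hnot))

theorem exists_ne_block_mem (hkv : k < v) (hB : B ∈ D.blocks) (hp : p ∈ B) :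
    ∃ C ∈ D.blocks, B ≠ C ∧ p ∈ C := by
  obtain ⟨q, hq⟩ : ∃ q, q ∉ B := by
    by_contra! hall
    have hBv : #B = v := by rw [eq_univ_of_forall hall, card_univ, D.card_points]
    exact hkv.ne ((D.block_card B hB).symm.trans hBv)
  obtain ⟨C, hC, hpC, hqC⟩ := D.exists_block_mem_mem (ne_of_mem_of_not_mem hp hq)
  exact ⟨C, hC, fun h => hq (h ▸ hqC), hpC⟩

theorem sum_card_inter_of_notMem (hp : p ∉ T) :
    ∑ C ∈ D.blocksThrough p, #(T ∩ C) = #T * lam := by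
  refine sum_card_inter fun q hq => ?_
  rw [blocksThrough, filter_filter]
  exact D.pair_blocks p q (ne_of_mem_of_not_mem hq hp).symm

theorem sum_card_inter_add_of_mem (hp : p ∈ T) :
    ∑ C ∈ D.blocksThrough p, #(T ∩ C) + lam = #T * lam + #(D.blocksThrough p) := by
  have hsum : ∑ C ∈ D.blocksThrough p, #(T ∩ C) =
      ∑ C ∈ D.blocksThrough p, (#(T.erase p ∩ C) + 1) := by
    refine sum_congr rfl fun C hC => ?_
    have hpC := (D.mem_blocksThrough.1 hC).2
    rw [erase_inter, card_erase_add_one (mem_inter.2 ⟨hp, hpC⟩)]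
  rw [hsum, sum_add_distrib, D.sum_card_inter_of_notMem (notMem_erase p T), ← card_eq_sum_ones,
    ← card_erase_add_one hp]
  ring

theorem card_blocksThrough_mul_add (p : P) :
    #(D.blocksThrough p) * k + lam = v * lam + #(D.blocksThrough p) := by
  have hsum : ∑ C ∈ D.blocksThrough p, #(univ ∩ C) = #(D.blocksThrough p) * k :=
    sum_const_nat fun C hC => by
      rw [univ_inter, D.block_card C (D.mem_blocksThrough.1 hC).1]
  rw [← hsum, D.sum_card_inter_add_of_mem (mem_univ p), card_univ, D.card_points]

theorem add_card_blocksThrough_sub_one_mul_add_le (hB : B ∈ D.blocks) (hp : p ∈ B)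
    (hmeet : ∀ C ∈ D.blocks, B ≠ C → p ∈ C → y ≤ #(B ∩ C)) :
    k + (#(D.blocksThrough p) - 1) * y + lam ≤ k * lam + #(D.blocksThrough p) := by
  have hBp : B ∈ D.blocksThrough p := D.mem_blocksThrough.2 ⟨hB, hp⟩
  have hothers : (#(D.blocksThrough p) - 1) * y ≤
      ∑ C ∈ (D.blocksThrough p).erase B, #(B ∩ C) := by
    rw [← card_erase_of_mem hBp, ← smul_eq_mul]
    refine card_nsmul_le_sum _ _ _ fun C hC => ?_
    obtain ⟨hCB, hCp⟩ := mem_erase.1 hC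
    obtain ⟨hC, hpC⟩ := D.mem_blocksThrough.1 hCp
    exact hmeet C hC hCB.symm hpC
  calc k + (#(D.blocksThrough p) - 1) * y + lam
      ≤ #(B ∩ B) + ∑ C ∈ (D.blocksThrough p).erase B, #(B ∩ C) + lam := by
        rw [inter_self, D.block_card B hB]
        gcongr
    _ = k * lam + #(D.blocksThrough p) := by
        rw [add_sum_erase _ (fun C => #(B ∩ C)) hBp, D.sum_card_inter_add_of_mem hp,
          D.block_card B hB]

theorem mul_sub_one_lt_of_le_card_inter (hyk : y < k) (hB : B ∈ D.blocks) (hp : p ∈ B)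
    (hmeet : ∀ C ∈ D.blocks, B ≠ C → p ∈ C → y ≤ #(B ∩ C)) :
    (v : ℚ) * (y - 1) < k ^ 2 - k := by
  have hr : 1 ≤ #(D.blocksThrough p) := card_pos.2 ⟨B, D.mem_blocksThrough.2 ⟨hB, hp⟩⟩
  have hcount := D.card_blocksThrough_mul_add p
  have hle := D.add_card_blocksThrough_sub_one_mul_add_le hB hp hmeet
  generalize #(D.blocksThrough p) = r at hr hcount hle
  have hcount' : (r : ℚ) * k + lam = v * lam + r := by exact_mod_cast hcount
  have hle' : (k : ℚ) + (r - 1) * y + lam ≤ k * lam + r := by exact_mod_cast hle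
  have hlam : (0 : ℚ) < lam := Nat.cast_pos.2 D.lam_pos
  have hk : (1 : ℚ) ≤ k := Nat.one_le_cast.2 (Nat.one_le_of_lt hyk)
  have hky : (0 : ℚ) < k - y := sub_pos.2 (Nat.cast_lt.2 hyk)
  have helim : (k - y : ℚ) * (lam + (k - 1)) ≤ lam * (k ^ 2 - k - v * (y - 1)) := by
    have hscaled := mul_le_mul_of_nonneg_left hle' (sub_nonneg.2 hk)
    linear_combination hscaled - (y - 1 : ℚ) * hcount'
  have hpos : (0 : ℚ) < lam * (k ^ 2 - k - v * (y - 1)) :=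
    (mul_pos hky (by linarith)).trans_le helim
  exact sub_pos.1 (pos_of_mul_pos_right hpos hlam.le)

end TwoDesign

theorem stmt_8_general {P : Type*} [Fintype P] [DecidableEq P] {v k lam y : ℕ}
    (D : TwoDesign P v k lam) (hk : 0 < k) (hkv : k < v) (hy : 2 ≤ y)
    (hmeet : ∀ B₁ ∈ D.blocks, ∀ B₂ ∈ D.blocks, B₁ ≠ B₂ →
      (B₁ ∩ B₂).Nonempty → y ≤ (B₁ ∩ B₂).card) :
    (v : ℚ) < ((k : ℚ) ^ 2 - (k : ℚ)) / ((y : ℚ) - 1) := by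
  obtain ⟨p, q, hpq⟩ : ∃ p q : P, p ≠ q :=
    Fintype.one_lt_card_iff.1 (D.card_points.symm ▸ (Nat.succ_le_of_lt hk).trans_lt hkv)
  obtain ⟨B, hB, hp, -⟩ := D.exists_block_mem_mem hpq
  have hmeet_p : ∀ C ∈ D.blocks, B ≠ C → p ∈ C → y ≤ (B ∩ C).card := fun C hC hBC hpC =>
    hmeet B hB C hC hBC ⟨p, Finset.mem_inter.2 ⟨hp, hpC⟩⟩
  obtain ⟨C, hC, hBC, hpC⟩ := D.exists_ne_block_mem hkv hB hp
  have hyk : y < k := (hmeet_p C hC hBC hpC).trans_lt (D.card_inter_lt hB hC hBC)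
  rw [lt_div_iff₀ (sub_pos.2 (Nat.one_lt_cast.2 hy))]
  exact D.mul_sub_one_lt_of_le_card_inter hyk hB hp hmeet_p

/-- For a non-trivial quasi-symmetric 2-(v,k,λ) design with intersection
numbers `0` and `y ≥ 2`: `v < (k² − k)/(y − 1)`. -/
theorem stmt_8 {P : Type*} [Fintype P] [DecidableEq P] {v k lam y : ℕ}
    (D : TwoDesign P v k lam)
    (hnt : 2 < k ∧ k < v - 1)
    (hy : 2 ≤ y)
    (hqs : QuasiSymmetricZero D.blocks y) :
    (v : ℚ) < ((k : ℚ) ^ 2 - (k : ℚ)) / ((y : ℚ) - 1) :=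
  stmt_8_general D (by omega) (by omega) hy fun B₁ hB₁ B₂ hB₂ hne hmeet =>
    ((hqs.1 B₁ hB₁ B₂ hB₂ hne).resolve_left hmeet.card_ne_zero).ge
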